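/- Let p, q ≥ 2 and 2 ≤ r ≤ min(p,q), let k = p·q, and regard a point π of Δ_{pq-1} as a p×q real matrix (π_{ij}). Let P0 = {π ∈ Δ_{pq-1} : rank(π) < r}, where rank is the rank of the real matrix. Then the NTUB and SUB unbiasedness thresholds of P0 both equal 2r: there is no NTUB test of P0 of any sample size n < 2r, and for every α ∈ (0,1) there exists c > 0 such that the function π ↦ c·∑_{I,J} det(π_{I,J})² + α on Δ_{pq-1} — the sum over all r-element subsets I of the rows and J of the columns, with π_{I,J} the corresponding r×r submatrix — is the power function of a strictly unbiased test of P0 of sample size 2r with size α. -/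

import Mathlib

open Finset

/-- The probability simplex on a finite index set `ι`. -/
def probSimplex (ι : Type) [Fintype ι] : Set (ι → ℝ) :=
  {π | (∀ i, 0 ≤ π i) ∧ ∑ i, π i = 1}

/-- Count vectors of sample size `n`: functions `x : ι → ℕ` with `∑ i, x i = n`. -/
def countVecs (ι : Type) [Fintype ι] [DecidableEq ι] (n : ℕ) : Finset (ι → ℕ) :=
  (Fintype.piFinset fun _ : ι => Finset.range (n + 1)).filter fun x => ∑ i, x i = n

/-- A (randomized) test of sample size `n`: values in `[0,1]` on all count vectors. -/
def IsTest (ι : Type) [Fintype ι] [DecidableEq ι] (n : ℕ) (φ : (ι → ℕ) → ℝ) : Prop :=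
  ∀ x ∈ countVecs ι n, 0 ≤ φ x ∧ φ x ≤ 1

/-- The power function of a test. -/
noncomputable def powerFn (ι : Type) [Fintype ι] [DecidableEq ι] (n : ℕ)
    (φ : (ι → ℕ) → ℝ) (π : ι → ℝ) : ℝ :=
  ∑ x ∈ countVecs ι n, φ x * (Nat.multinomial Finset.univ x : ℝ) * ∏ i, π i ^ x i

/-- Unbiasedness relative to the null hypothesis `P0`. -/
def Unbiased (ι : Type) [Fintype ι] [DecidableEq ι] (n : ℕ) (P0 : Set (ι → ℝ))
    (φ : (ι → ℕ) → ℝ) : Prop :=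
  ∀ π0 ∈ P0, ∀ πA ∈ probSimplex ι \ P0, powerFn ι n φ π0 ≤ powerFn ι n φ πA

/-- Non-trivial unbiased test: unbiased with non-constant power on the simplex. -/
def IsNTUB (ι : Type) [Fintype ι] [DecidableEq ι] (n : ℕ) (P0 : Set (ι → ℝ))
    (φ : (ι → ℕ) → ℝ) : Prop :=
  Unbiased ι n P0 φ ∧
    ∃ π ∈ probSimplex ι, ∃ π' ∈ probSimplex ι, powerFn ι n φ π ≠ powerFn ι n φ π'

/-- Strictly unbiased test. -/
def IsSUB (ι : Type) [Fintype ι] [DecidableEq ι] (n : ℕ) (P0 : Set (ι → ℝ))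
    (φ : (ι → ℕ) → ℝ) : Prop :=
  ∀ π0 ∈ P0, ∀ πA ∈ probSimplex ι \ P0, powerFn ι n φ π0 < powerFn ι n φ πA

/-- Level-`α` test. -/
def IsLevel (ι : Type) [Fintype ι] [DecidableEq ι] (n : ℕ) (P0 : Set (ι → ℝ)) (α : ℝ)
    (φ : (ι → ℕ) → ℝ) : Prop :=
  ∀ π ∈ P0, powerFn ι n φ π ≤ α

/-- A test has size `α` if the supremum of its power over `P0` is `α`. -/
def HasSize (ι : Type) [Fintype ι] [DecidableEq ι] (n : ℕ) (P0 : Set (ι → ℝ)) (α : ℝ)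
    (φ : (ι → ℕ) → ℝ) : Prop :=
  IsLUB (powerFn ι n φ '' P0) α

/-- Uniformly most powerful unbiased level-`α` test. -/
def IsUMPU (ι : Type) [Fintype ι] [DecidableEq ι] (n : ℕ) (P0 : Set (ι → ℝ)) (α : ℝ)
    (φ : (ι → ℕ) → ℝ) : Prop :=
  IsLevel ι n P0 α φ ∧ Unbiased ι n P0 φ ∧
    ∀ ψ, IsTest ι n ψ → IsLevel ι n P0 α ψ → Unbiased ι n P0 ψ →
      ∀ πA ∈ probSimplex ι \ P0, powerFn ι n ψ πA ≤ powerFn ι n φ πA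

/-- The squared determinant of the `r × r` submatrix of the `p × q` matrix `π` with rows `s`
and columns `t` (`0` if `s` or `t` does not have `r` elements). -/
noncomputable def minorDetSq (p q r : ℕ) (π : Fin p × Fin q → ℝ)
    (s : Finset (Fin p)) (t : Finset (Fin q)) : ℝ :=
  if h : s.card = r ∧ t.card = r then
    (Matrix.det (Matrix.of fun a b : Fin r =>
      π ((s.orderIsoOfFin h.1 a : Fin p), (t.orderIsoOfFin h.2 b : Fin q)))) ^ 2
  else 0

/-!
A power function is a homogeneous polynomial of degree `n` in the cell probabilities. The matrices
of rank at least `r` are dense in the simplex, so an unbiased test has constant power `a` on the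
null hypothesis, and its power minus `a`, homogenized, is a polynomial `P ≥ 0` on the positive
orthant vanishing on products of inner dimension `r - 1`. For positive `U`, `V` of inner dimension
`s + 1 ≥ r`, the form `t ↦ P (U * diagonal t * V)` in `s + 1` variables vanishes on each hyperplane
`t i = 0` and has a local minimum there, so every monomial occurring in it contains every `t i` at
least twice; as its degree is less than `2 * (s + 1)`, it is zero. Raising the inner dimension in
this way gives `P = 0`, so the power is constant.

Conversely, every homogeneous polynomial `Q` of degree `2 * r` is a combination of multinomial
probabilities, so `c * Q + α` is the power function of a test once `c > 0` is small. The sum of the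
squared `r × r` minors is such a `Q`, and it is zero or positive according as the rank is less than
`r` or not.
-/

section Polynomials

open MvPolynomial Filter Topology

variable {σ : Type*}

theorem eval_smul_of_isHomogeneous {R : Type*} [CommSemiring R] {P : MvPolynomial σ R} {n : ℕ}
    (hP : P.IsHomogeneous n) (c : R) (x : σ → R) : eval (c • x) P = c ^ n * eval x P := by
  simp only [eval_eq, mul_sum]
  refine sum_congr rfl fun d hd ↦ ?_
  simp only [Pi.smul_apply, smul_eq_mul, mul_pow, prod_mul_distrib, prod_pow_eq_pow_sum]
  rw [← hP.degree_eq_sum_deg_support hd]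
  ring

theorem eval_bind₁ {R τ : Type*} [CommSemiring R] (g : σ → MvPolynomial τ R) (P : MvPolynomial σ R)
    (t : τ → R) : eval t (bind₁ g P) = eval (fun i ↦ eval t (g i)) P :=
  eval₂Hom_bind₁ _ _ _ _

theorem isHomogeneous_det {R κ : Type*} [CommRing R] [Fintype κ] [DecidableEq κ] {n : ℕ}
    (M : Matrix κ κ (MvPolynomial σ R)) (hM : ∀ a b, (M a b).IsHomogeneous n) :
    M.det.IsHomogeneous (Fintype.card κ * n) := by
  rw [Matrix.det_apply']
  refine .sum _ _ _ fun τ _ ↦ ?_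
  have hprod := IsHomogeneous.prod univ (fun i ↦ M (τ i) i) (fun _ ↦ n) fun i _ ↦ hM _ _
  rw [sum_const, card_univ, smul_eq_mul] at hprod
  simpa using hprod.C_mul ((Equiv.Perm.sign τ : ℤ) : R)

theorem subset_closure_eval_ne_zero {K : Set (σ → ℝ)} (hK : Convex ℝ K) (P : MvPolynomial σ ℝ)
    {z : σ → ℝ} (hz : z ∈ K) (hPz : eval z P ≠ 0) : K ⊆ closure {x ∈ K | eval x P ≠ 0} := by
  intro w hw
  let Q : Polynomial ℝ :=
    aeval (fun i ↦ Polynomial.X * Polynomial.C (z i - w i) + Polynomial.C (w i)) P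
  have eval_Q (x : ℝ) : Q.eval x = eval (AffineMap.lineMap w z x) P := by
    rw [← Polynomial.coe_aeval_eq_eval, comp_aeval_apply, aeval_eq_eval]
    congr 2 with i
    simp [AffineMap.lineMap_apply]
  have eval_one := eval_Q 1
  have Q_ne_zero : Q ≠ 0 := by
    intro hQ
    simp [hQ, hPz.symm] at eval_one
  have Q_eval_ne_zero : ∀ᶠ x in 𝓝[>] (0 : ℝ), Q.eval x ≠ 0 :=
    (nhdsGT_le_nhdsNE 0).trans (nhdsNE_le_cofinite 0) <|
      Q.roots.toFinset.finite_toSet.subset fun x hx ↦ by simpa [Q_ne_zero] using hx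
  have tendsto_w : Tendsto (fun x : ℝ ↦ AffineMap.lineMap w z x) (𝓝[>] 0) (𝓝 w) := by
    have hcont : Continuous fun x : ℝ ↦ AffineMap.lineMap w z x := AffineMap.lineMap_continuous
    simpa using (hcont.tendsto 0).mono_left nhdsWithin_le_nhds
  refine mem_closure_of_tendsto tendsto_w ?_
  filter_upwards [Q_eval_ne_zero, Ioo_mem_nhdsGT one_pos] with x hQx hx
  exact ⟨hK.lineMap_mem hw hz ⟨hx.1.le, hx.2.le⟩, eval_Q x ▸ hQx⟩

variable [DecidableEq σ]

theorem coeff_bind₁_update_X_zero {R : Type*} [CommSemiring R] (P : MvPolynomial σ R) {i : σ}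
    {m : σ →₀ ℕ} (hm : m i = 0) : coeff m (bind₁ (Function.update X i 0) P) = coeff m P := by
  induction P using MvPolynomial.induction_on' with
  | add P Q hP hQ => simp [hP, hQ]
  | monomial d a =>
    rw [bind₁_monomial]
    by_cases hd : d i = 0
    · congr 1
      rw [monomial_eq, Finsupp.prod]
      refine congrArg _ <| prod_congr rfl fun j hj ↦ ?_
      rw [Function.update_of_ne]
      rintro rfl
      exact Finsupp.mem_support_iff.1 hj hd
    · have hdm : d ≠ m := fun h ↦ hd (h ▸ hm)
      rw [prod_eq_zero (Finsupp.mem_support_iff.2 hd) (by simp [hd]), coeff_monomial, if_neg hdm,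
        mul_zero, coeff_zero]

theorem coeff_eq_zero_of_eval_update_zero {R : Type*} [CommRing R] [IsDomain R]
    {P : MvPolynomial σ R} {i : σ} (S : σ → Set R) (hS : ∀ j, (S j).Infinite)
    (hP : ∀ t ∈ Set.univ.pi S, eval (Function.update t i 0) P = 0) {m : σ →₀ ℕ} (hm : m i = 0) :
    coeff m P = 0 := by
  have hzero : bind₁ (Function.update X i 0) P = 0 := by
    refine funext_set S hS fun t ht ↦ ?_
    rw [map_zero, ← hP t ht, eval_bind₁]
    congr 2 with j
    by_cases hj : j = i <;> simp [hj]
  rw [← coeff_bind₁_update_X_zero P hm, hzero, coeff_zero]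

theorem hasDerivAt_eval_update {𝕜 : Type*} [NontriviallyNormedField 𝕜] (P : MvPolynomial σ 𝕜)
    (t : σ → 𝕜) (i : σ) (x : 𝕜) :
    HasDerivAt (fun y ↦ eval (Function.update t i y) P)
      (eval (Function.update t i x) (pderiv i P)) x := by
  induction P using MvPolynomial.induction_on with
  | C a => simpa using hasDerivAt_const x a
  | add P Q hP hQ => simpa only [map_add] using hP.fun_add hQ
  | mul_X P j hP =>
    have hX : HasDerivAt (fun y ↦ Function.update t i y j) ((Pi.single i 1 : σ → 𝕜) j) x := by
      by_cases hj : j = i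
      · subst hj
        simpa using hasDerivAt_id' x
      · simpa [hj] using hasDerivAt_const x (t j)
    have eval_pderiv_X (y : σ → 𝕜) : eval y (pderiv i (X j)) = (Pi.single i 1 : σ → 𝕜) j := by
      by_cases hj : j = i <;> simp [pderiv_X, hj]
    simp only [map_mul, eval_X, pderiv_mul, map_add, eval_pderiv_X]
    exact hP.fun_mul hX

theorem coeff_eq_zero_of_isLocalMin_eval_update {P : MvPolynomial σ ℝ} {i : σ}
    (hzero : ∀ t : σ → ℝ, (∀ j, 0 < t j) → eval (Function.update t i 0) P = 0)
    (hmin : ∀ t : σ → ℝ, (∀ j, 0 < t j) → IsLocalMin (fun x ↦ eval (Function.update t i x) P) 0)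
    {m : σ →₀ ℕ} (hm : m i ≤ 1) : coeff m P = 0 := by
  have hS : ∀ _ : σ, (Set.Ioi (0 : ℝ)).Infinite := fun _ ↦ Set.Ioi_infinite 0
  obtain hm | hm := Nat.le_one_iff_eq_zero_or_eq_one.1 hm
  · exact coeff_eq_zero_of_eval_update_zero _ hS (fun t ht ↦ hzero t fun j ↦ ht j trivial) hm
  · have hpderiv : coeff (m - Finsupp.single i 1) (pderiv i P) = 0 := by
      refine coeff_eq_zero_of_eval_update_zero (i := i) _ hS (fun t ht ↦ ?_) (by simp [hm])
      exact (hmin t fun j ↦ ht j trivial).hasDerivAt_eq_zero (hasDerivAt_eval_update P t i 0)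
    have hle : Finsupp.single i 1 ≤ m := by simp [hm]
    simpa [coeff_pderiv, tsub_add_cancel_of_le hle, hm] using hpderiv

theorem eq_zero_of_isHomogeneous_of_isLocalMin_eval_update [Fintype σ] {P : MvPolynomial σ ℝ}
    {n : ℕ} (hP : P.IsHomogeneous n) (hn : n < 2 * Fintype.card σ)
    (hzero : ∀ i, ∀ t : σ → ℝ, (∀ j, 0 < t j) → eval (Function.update t i 0) P = 0)
    (hmin : ∀ i, ∀ t : σ → ℝ, (∀ j, 0 < t j) →
      IsLocalMin (fun x ↦ eval (Function.update t i x) P) 0) : P = 0 := by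
  ext m
  by_cases hdeg : m.degree = n
  · obtain ⟨i, -, hi⟩ : ∃ i ∈ univ, m i < 2 := by
      refine exists_lt_of_sum_lt ?_
      rw [← Finsupp.degree_eq_sum, hdeg, sum_const, card_univ, smul_eq_mul]
      omega
    exact coeff_eq_zero_of_isLocalMin_eval_update (hzero i) (hmin i) (Nat.le_of_lt_succ hi)
  · exact hP.coeff_eq_zero hdeg

end Polynomials

section Products

open MvPolynomial Filter Topology

variable {m n : Type*}

/-- `P`, read as a function of the entries of an `m × n` matrix, vanishes on every product of a
positive `m × s` matrix with a positive `s × n` matrix; these products are matrices of nonnegative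
rank at most `s`. -/
def VanishesOnPosProducts (P : MvPolynomial (m × n) ℝ) (s : ℕ) : Prop :=
  ∀ (U : Matrix m (Fin s) ℝ) (V : Matrix (Fin s) n ℝ),
    (∀ i k, 0 < U i k) → (∀ k j, 0 < V k j) → eval (fun e ↦ (U * V) e.1 e.2) P = 0

/-- The entries of `U * diagonal t * V` as linear forms in the variables `t`. -/
noncomputable def diagonalProductForm {s : ℕ} (U : Matrix m (Fin s) ℝ) (V : Matrix (Fin s) n ℝ)
    (e : m × n) : MvPolynomial (Fin s) ℝ :=
  ∑ k, C (U e.1 k * V k e.2) * X k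

theorem isHomogeneous_diagonalProductForm {s : ℕ} (U : Matrix m (Fin s) ℝ)
    (V : Matrix (Fin s) n ℝ) (e : m × n) : (diagonalProductForm U V e).IsHomogeneous 1 :=
  .sum _ _ _ fun k _ ↦ (isHomogeneous_X ℝ k).C_mul _

theorem eval_diagonalProductForm {s : ℕ} (U : Matrix m (Fin s) ℝ) (V : Matrix (Fin s) n ℝ)
    (e : m × n) (t : Fin s → ℝ) :
    eval t (diagonalProductForm U V e) = (U * Matrix.diagonal t * V) e.1 e.2 := by
  rw [Matrix.mul_apply]
  simp [diagonalProductForm, Matrix.mul_diagonal, mul_right_comm]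

theorem mul_diagonal_update_zero_mul {s : ℕ} (U : Matrix m (Fin (s + 1)) ℝ)
    (V : Matrix (Fin (s + 1)) n ℝ) (t : Fin (s + 1) → ℝ) (i : Fin (s + 1)) :
    U * Matrix.diagonal (Function.update t i 0) * V =
      U.submatrix id i.succAbove * (Matrix.diagonal t * V).submatrix i.succAbove id := by
  ext a b
  rw [Matrix.mul_apply, Matrix.mul_apply]
  simp [Matrix.mul_diagonal, Matrix.diagonal_mul, Fin.sum_univ_succAbove _ i, mul_assoc]

theorem eventually_mul_diagonal_update_mul_pos [Finite m] [Finite n] {s : ℕ} [NeZero s]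
    {U : Matrix m (Fin (s + 1)) ℝ} {V : Matrix (Fin (s + 1)) n ℝ} (hU : ∀ i k, 0 < U i k)
    (hV : ∀ k j, 0 < V k j) {t : Fin (s + 1) → ℝ} (ht : ∀ k, 0 < t k) (i : Fin (s + 1)) :
    ∀ᶠ x in 𝓝 (0 : ℝ), ∀ e : m × n,
      0 < (U * Matrix.diagonal (Function.update t i x) * V) e.1 e.2 := by
  refine eventually_all.2 fun e ↦ ?_
  have hcont : Continuous fun x : ℝ ↦
      (U * Matrix.diagonal (Function.update t i x) * V) e.1 e.2 := by
    fun_prop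
  refine hcont.continuousAt.eventually_const_lt ?_
  beta_reduce
  rw [mul_diagonal_update_zero_mul, Matrix.mul_apply]
  refine sum_pos (fun k _ ↦ mul_pos (hU _ _) ?_) univ_nonempty
  simpa [Matrix.diagonal_mul] using mul_pos (ht _) (hV _ _)

theorem VanishesOnPosProducts.succ [Finite m] [Finite n] {P : MvPolynomial (m × n) ℝ} {d s : ℕ}
    [NeZero s] (hP : P.IsHomogeneous d) (hd : d < 2 * (s + 1))
    (hpos : ∀ A : m × n → ℝ, (∀ e, 0 < A e) → 0 ≤ eval A P) (hv : VanishesOnPosProducts P s) :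
    VanishesOnPosProducts P (s + 1) := by
  intro U V hU hV
  set H := bind₁ (diagonalProductForm U V) P
  have eval_H (t) : eval t H = eval (fun e ↦ (U * Matrix.diagonal t * V) e.1 e.2) P := by
    simp only [H, eval_bind₁, eval_diagonalProductForm]
  have H_homogeneous : H.IsHomogeneous d := by
    simpa using hP.aeval _ (isHomogeneous_diagonalProductForm U V)
  have H_update_zero (i) (t : Fin (s + 1) → ℝ) (ht : ∀ k, 0 < t k) :
      eval (Function.update t i 0) H = 0 := by
    rw [eval_H, mul_diagonal_update_zero_mul]
    refine hv _ _ (fun _ _ ↦ hU _ _) fun k j ↦ ?_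
    simpa [Matrix.diagonal_mul] using mul_pos (ht _) (hV _ _)
  have H_eq_zero : H = 0 := by
    refine eq_zero_of_isHomogeneous_of_isLocalMin_eval_update H_homogeneous (by simpa using hd)
      H_update_zero fun i t ht ↦ ?_
    filter_upwards [eventually_mul_diagonal_update_mul_pos hU hV ht i] with x hx
    rw [H_update_zero i t ht, eval_H]
    exact hpos _ hx
  simpa [H_eq_zero] using (eval_H 1).symm

theorem VanishesOnPosProducts.mono [Finite m] [Finite n] {P : MvPolynomial (m × n) ℝ} {d s S : ℕ}
    (hs : s ≠ 0) (hP : P.IsHomogeneous d) (hd : d < 2 * (s + 1))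
    (hpos : ∀ A : m × n → ℝ, (∀ e, 0 < A e) → 0 ≤ eval A P) (hv : VanishesOnPosProducts P s)
    (hS : s ≤ S) : VanishesOnPosProducts P S := by
  induction S, hS using Nat.le_induction with
  | base => exact hv
  | succ S hS ih =>
    have : NeZero S := ⟨by omega⟩
    exact ih.succ hP (by omega) hpos

/-- The entries of the product of a generic `m × s` matrix with a generic `s × n` matrix. -/
noncomputable def genericProductForm (s : ℕ) (e : m × n) :
    MvPolynomial ((m × Fin s) ⊕ (Fin s × n)) ℝ :=
  ∑ k, X (.inl (e.1, k)) * X (.inr (k, e.2))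

theorem VanishesOnPosProducts.eval_mul {P : MvPolynomial (m × n) ℝ} {s : ℕ}
    (hv : VanishesOnPosProducts P s) (U : Matrix m (Fin s) ℝ) (V : Matrix (Fin s) n ℝ) :
    eval (fun e ↦ (U * V) e.1 e.2) P = 0 := by
  have eval_form (w : (m × Fin s) ⊕ (Fin s × n) → ℝ) (e : m × n) :
      eval w (genericProductForm s e) = ∑ k, w (.inl (e.1, k)) * w (.inr (k, e.2)) := by
    simp [genericProductForm]
  have hzero : bind₁ (genericProductForm s) P = 0 := by
    refine funext_set (fun _ ↦ Set.Ioi 0) (fun _ ↦ Set.Ioi_infinite 0) fun w hw ↦ ?_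
    simp only [eval_bind₁, eval_form, map_zero]
    exact hv (fun i k ↦ w (.inl (i, k))) (fun k j ↦ w (.inr (k, j)))
      (fun _ _ ↦ hw _ trivial) fun _ _ ↦ hw _ trivial
  have heval := eval_bind₁ (genericProductForm s) P
    (Sum.elim (fun e ↦ U e.1 e.2) fun e ↦ V e.1 e.2)
  simpa [hzero, eval_form, Matrix.mul_apply] using heval.symm

theorem VanishesOnPosProducts.eq_zero [Finite m] [Fintype n] {P : MvPolynomial (m × n) ℝ}
    {d s : ℕ} (hs : s ≠ 0) (hsn : s ≤ Fintype.card n) (hP : P.IsHomogeneous d)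
    (hd : d < 2 * (s + 1)) (hpos : ∀ A : m × n → ℝ, (∀ e, 0 < A e) → 0 ≤ eval A P)
    (hv : VanishesOnPosProducts P s) : P = 0 := by
  classical
  refine MvPolynomial.funext fun A ↦ ?_
  have hmul := (hv.mono hs hP hd hpos hsn).eval_mul
    ((Matrix.of fun i j ↦ A (i, j)).submatrix id (Fintype.equivFin n).symm)
    ((1 : Matrix n n ℝ).submatrix (Fintype.equivFin n).symm id)
  simpa [Matrix.submatrix_mul_equiv] using hmul

end Products

section Minors

open Matrix

variable {K m n : Type*} [Field K] [Finite m] [Fintype n] [LinearOrder m]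

theorem exists_linearIndependent_orderEmbOfFin {r : ℕ} (A : Matrix m n K) (hr : r ≤ A.rank) :
    ∃ (s : Finset m) (hs : s.card = r), LinearIndependent K fun a ↦ A (s.orderEmbOfFin hs a) := by
  obtain ⟨b, -, -, hspan, hb⟩ :=
    exists_linearIndepOn_extension (linearIndepOn_empty K A.row) (Set.empty_subset Set.univ)
  lift b to Finset m using b.toFinite
  have hcard : r ≤ b.card := by
    rw [Set.image_univ, ← Submodule.span_le] at hspan
    calc r ≤ A.rank := hr
      _ = Module.finrank K (Submodule.span K (Set.range A.row)) := A.rank_eq_finrank_span_row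
      _ ≤ Module.finrank K (Submodule.span K (A.row '' b)) := Submodule.finrank_mono hspan
      _ = b.card := by
        rw [Set.image_eq_range, finrank_span_eq_card hb]
        simp
  obtain ⟨s, hsb, hs⟩ := exists_subset_card_eq hcard
  exact ⟨s, hs, (hb.mono (coe_subset.2 hsb)).comp _ (s.orderIsoOfFin hs).injective⟩

theorem rank_lt_iff_forall_det_eq_zero [LinearOrder n] {r : ℕ} (A : Matrix m n K) :
    A.rank < r ↔ ∀ (s : Finset m) (t : Finset n) (hs : s.card = r) (ht : t.card = r),
      (A.submatrix (s.orderEmbOfFin hs) (t.orderEmbOfFin ht)).det = 0 := by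
  constructor
  · intro hrank s t hs ht
    by_contra hdet
    have hle := A.rank_submatrix_le (s.orderEmbOfFin hs) (t.orderEmbOfFin ht)
    rw [rank_of_det_ne_zero hdet, Fintype.card_fin] at hle
    exact hle.not_gt hrank
  · intro hdet
    by_contra! hr
    obtain ⟨s, hs, hrows⟩ := exists_linearIndependent_orderEmbOfFin A hr
    have hrank : (A.submatrix (s.orderEmbOfFin hs) id)ᵀ.rank = r := by
      rw [rank_transpose]
      simpa using LinearIndependent.rank_matrix (M := A.submatrix (s.orderEmbOfFin hs) id) hrows
    obtain ⟨t, ht, hcols⟩ := exists_linearIndependent_orderEmbOfFin _ hrank.ge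
    have hunit := (isUnit_transpose _).1 (linearIndependent_rows_iff_isUnit.1 hcols)
    exact ((isUnit_iff_isUnit_det _).1 hunit).ne_zero (hdet s t hs ht)

end Minors

section SquaredMinors

open MvPolynomial

variable (p q r : ℕ)

/-- The polynomial in the entries of a generic `p × q` matrix whose values are `minorDetSq`. -/
noncomputable def sqMinor (s : Finset (Fin p)) (t : Finset (Fin q)) :
    MvPolynomial (Fin p × Fin q) ℝ :=
  if h : s.card = r ∧ t.card = r then
    ((Matrix.mvPolynomialX (Fin p) (Fin q) ℝ).submatrix
      (s.orderEmbOfFin h.1) (t.orderEmbOfFin h.2)).det ^ 2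
  else 0

/-- The sum of the squares of all `r × r` minors of a generic `p × q` matrix; its zeros are the
matrices of rank less than `r`. -/
noncomputable def sumSqMinors : MvPolynomial (Fin p × Fin q) ℝ :=
  ∑ s ∈ powersetCard r univ, ∑ t ∈ powersetCard r univ, sqMinor p q r s t

theorem isHomogeneous_sumSqMinors : (sumSqMinors p q r).IsHomogeneous (2 * r) := by
  refine .sum _ _ _ fun s _ ↦ .sum _ _ _ fun t _ ↦ ?_
  unfold sqMinor
  split_ifs with h
  · have hdet := isHomogeneous_det ((Matrix.mvPolynomialX (Fin p) (Fin q) ℝ).submatrix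
      (s.orderEmbOfFin h.1) (t.orderEmbOfFin h.2)) fun _ _ ↦ isHomogeneous_X ℝ _
    simpa [mul_comm 2 r] using hdet.pow 2
  · exact isHomogeneous_zero _ _ _

variable {p q r}

theorem eval_sqMinor (π : Fin p × Fin q → ℝ) (s : Finset (Fin p)) (t : Finset (Fin q)) :
    eval π (sqMinor p q r s t) = minorDetSq p q r π s t := by
  unfold sqMinor minorDetSq
  split_ifs
  · rw [map_pow, RingHom.map_det]
    congr 2
    ext a b
    simp
  · exact map_zero _

theorem eval_sumSqMinors (π : Fin p × Fin q → ℝ) : eval π (sumSqMinors p q r) =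
    ∑ s ∈ powersetCard r univ, ∑ t ∈ powersetCard r univ, minorDetSq p q r π s t := by
  simp only [sumSqMinors, map_sum, eval_sqMinor]

theorem minorDetSq_of_card_eq (π : Fin p × Fin q → ℝ) {s : Finset (Fin p)} {t : Finset (Fin q)}
    (hs : s.card = r) (ht : t.card = r) :
    minorDetSq p q r π s t = ((Matrix.of fun i j ↦ π (i, j)).submatrix
      (s.orderEmbOfFin hs) (t.orderEmbOfFin ht)).det ^ 2 :=
  dif_pos ⟨hs, ht⟩

theorem minorDetSq_nonneg (π : Fin p × Fin q → ℝ) (s : Finset (Fin p)) (t : Finset (Fin q)) :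
    0 ≤ minorDetSq p q r π s t := by
  unfold minorDetSq
  split_ifs <;> positivity

theorem eval_sumSqMinors_nonneg (π : Fin p × Fin q → ℝ) : 0 ≤ eval π (sumSqMinors p q r) :=
  eval_sumSqMinors π ▸ sum_nonneg fun s _ ↦ sum_nonneg fun t _ ↦ minorDetSq_nonneg π s t

theorem eval_sumSqMinors_eq_zero_iff {π : Fin p × Fin q → ℝ} :
    eval π (sumSqMinors p q r) = 0 ↔ (Matrix.of fun i j ↦ π (i, j)).rank < r := by
  have nonneg := minorDetSq_nonneg (r := r) π
  rw [eval_sumSqMinors, rank_lt_iff_forall_det_eq_zero,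
    sum_eq_zero_iff_of_nonneg fun s _ ↦ sum_nonneg fun t _ ↦ nonneg s t]
  simp only [sum_eq_zero_iff_of_nonneg fun t _ ↦ nonneg _ t, mem_powersetCard_univ]
  refine forall_congr' fun s ↦ ⟨fun h t hs ht ↦ ?_, fun h hs t ht ↦ ?_⟩
  · rw [← sq_eq_zero_iff, ← minorDetSq_of_card_eq π hs ht, h hs t ht]
  · rw [minorDetSq_of_card_eq π hs ht, h t hs ht, zero_pow two_ne_zero]

end SquaredMinors

section PowerFunctions

open MvPolynomial Filter Topology

variable {ι : Type} [Fintype ι]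

theorem convex_probSimplex : Convex ℝ (probSimplex ι) :=
  convex_stdSimplex ℝ ι

theorem inv_sum_smul_mem_probSimplex {A : ι → ℝ} (hA : 0 < A) :
    (∑ i, A i)⁻¹ • A ∈ probSimplex ι := by
  have hsum : 0 < ∑ i, A i := Fintype.sum_pos hA
  refine ⟨fun i ↦ mul_nonneg (inv_nonneg.2 hsum.le) (hA.le i), ?_⟩
  simp only [Pi.smul_apply, smul_eq_mul, ← mul_sum]
  exact inv_mul_cancel₀ hsum.ne'

theorem eval_eq_sum_pow_mul_eval_inv_sum_smul {P : MvPolynomial ι ℝ} {n : ℕ}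
    (hP : P.IsHomogeneous n) {A : ι → ℝ} (hA : 0 < A) :
    eval A P = (∑ i, A i) ^ n * eval ((∑ i, A i)⁻¹ • A) P := by
  rw [← eval_smul_of_isHomogeneous hP, smul_inv_smul₀ (Fintype.sum_pos hA).ne']

variable [DecidableEq ι] {n : ℕ}

theorem countVecs_eq_piAntidiag : countVecs ι n = piAntidiag univ n := by
  ext x
  simp only [countVecs, mem_filter, Fintype.mem_piFinset, mem_range, mem_piAntidiag, mem_univ,
    implies_true, and_true, and_iff_right_iff_imp, Order.lt_add_one_iff]
  rintro rfl i
  exact single_le_sum_of_canonicallyOrdered (mem_univ i)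

theorem mem_countVecs {x : ι → ℕ} : x ∈ countVecs ι n ↔ ∑ i, x i = n := by
  simp [countVecs_eq_piAntidiag]

theorem powerFn_mul_add (φ : (ι → ℕ) → ℝ) (c a : ℝ) {π : ι → ℝ} (hπ : π ∈ probSimplex ι) :
    powerFn ι n (fun x ↦ c * φ x + a) π = c * powerFn ι n φ π + a := by
  have multinomial_sum :
      ∑ x ∈ countVecs ι n, (Nat.multinomial univ x : ℝ) * ∏ i, π i ^ x i = 1 := by
    rw [countVecs_eq_piAntidiag, ← sum_pow_eq_sum_piAntidiag, hπ.2, one_pow]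
  simp only [powerFn, add_mul, sum_add_distrib, mul_assoc, ← mul_sum, multinomial_sum, mul_one]

/-- The power function of `φ` as a polynomial in the cell probabilities. -/
noncomputable def powerPoly (n : ℕ) (φ : (ι → ℕ) → ℝ) : MvPolynomial ι ℝ :=
  ∑ x ∈ countVecs ι n,
    monomial (Finsupp.equivFunOnFinite.symm x) (φ x * (Nat.multinomial univ x : ℝ))

theorem isHomogeneous_powerPoly (φ : (ι → ℕ) → ℝ) : (powerPoly n φ).IsHomogeneous n := by
  refine .sum _ _ _ fun x hx ↦ isHomogeneous_monomial _ ?_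
  rw [Finsupp.degree_eq_sum]
  exact mem_countVecs.1 hx

theorem eval_powerPoly (φ : (ι → ℕ) → ℝ) (π : ι → ℝ) :
    eval π (powerPoly n φ) = powerFn ι n φ π := by
  simp [powerPoly, powerFn, eval_monomial, Finsupp.prod_fintype]

theorem continuous_powerFn (φ : (ι → ℕ) → ℝ) : Continuous (powerFn ι n φ) :=
  (powerPoly n φ).continuous_eval.congr (eval_powerPoly φ)

theorem exists_powerFn_eq_eval {P : MvPolynomial ι ℝ} (hP : P.IsHomogeneous n) :
    ∃ φ : (ι → ℕ) → ℝ, ∀ π, powerFn ι n φ π = eval π P := by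
  refine ⟨fun x ↦ P.coeff (Finsupp.equivFunOnFinite.symm x) / Nat.multinomial univ x, fun π ↦ ?_⟩
  rw [eval_eq', powerFn]
  refine (sum_of_injOn (fun d : ι →₀ ℕ ↦ ⇑d) DFunLike.coe_injective.injOn ?_ ?_ ?_).symm
  · intro d hd
    rw [mem_coe, mem_countVecs, ← Finsupp.degree_eq_sum]
    by_contra hdeg
    exact mem_support_iff.1 hd (hP.coeff_eq_zero hdeg)
  · intro x _ hx
    have hcoeff : P.coeff (Finsupp.equivFunOnFinite.symm x) = 0 := by
      by_contra hne
      exact hx ⟨_, mem_support_iff.2 hne, rfl⟩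
    simp [hcoeff]
  · intro d _
    rw [div_mul_cancel₀ _ (by exact_mod_cast (Nat.multinomial_pos _ _).ne')]
    simp

theorem exists_pos_isTest_mul_add (φ : (ι → ℕ) → ℝ) {α : ℝ} (hα : α ∈ Set.Ioo (0 : ℝ) 1) :
    ∃ c > 0, IsTest ι n fun x ↦ c * φ x + α := by
  have near_zero (x : ι → ℕ) : ∀ᶠ c in 𝓝[>] (0 : ℝ), c * φ x + α ∈ Set.Icc (0 : ℝ) 1 := by
    have hcont : ContinuousAt (fun c ↦ c * φ x + α) 0 := by fun_prop
    exact nhdsWithin_le_nhds (hcont (Icc_mem_nhds (by simpa using hα.1) (by simpa using hα.2)))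
  have all_near_zero : ∀ᶠ c in 𝓝[>] (0 : ℝ), IsTest ι n fun x ↦ c * φ x + α :=
    (eventually_all_finset _).2 fun x _ ↦ near_zero x
  obtain ⟨c, hc, htest⟩ := (eventually_mem_nhdsWithin.and all_near_zero).exists
  exact ⟨c, hc, htest⟩

theorem exists_isSUB_hasSize_of_isHomogeneous {Q : MvPolynomial ι ℝ} (hQ : Q.IsHomogeneous n)
    (hnonneg : ∀ π ∈ probSimplex ι, 0 ≤ eval π Q) {P0 : Set (ι → ℝ)}
    (hP0 : P0 = {π ∈ probSimplex ι | eval π Q = 0}) (hne : P0.Nonempty) {α : ℝ}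
    (hα : α ∈ Set.Ioo (0 : ℝ) 1) :
    ∃ c > 0, ∃ φ, IsTest ι n φ ∧ IsSUB ι n P0 φ ∧ HasSize ι n P0 α φ ∧
      ∀ π ∈ probSimplex ι, powerFn ι n φ π = c * eval π Q + α := by
  obtain ⟨ψ, hψ⟩ := exists_powerFn_eq_eval hQ
  obtain ⟨c, hc, htest⟩ := exists_pos_isTest_mul_add (n := n) ψ hα
  have power_eq (π) (hπ : π ∈ probSimplex ι) :
      powerFn ι n (fun x ↦ c * ψ x + α) π = c * eval π Q + α := by
    rw [powerFn_mul_add ψ c α hπ, hψ]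
  have power_null (π) (hπ : π ∈ P0) : powerFn ι n (fun x ↦ c * ψ x + α) π = α := by
    obtain ⟨hπ, hzero⟩ := hP0 ▸ hπ
    rw [power_eq π hπ, hzero, mul_zero, zero_add]
  refine ⟨c, hc, _, htest, fun π₀ hπ₀ π ⟨hπ, hπP0⟩ ↦ ?_, ?_, power_eq⟩
  · have hpos : 0 < eval π Q :=
      (hnonneg π hπ).lt_of_ne' fun hzero ↦ hπP0 (hP0 ▸ ⟨hπ, hzero⟩)
    rw [power_null π₀ hπ₀, power_eq π hπ]
    exact lt_add_of_pos_left α (mul_pos hc hpos)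
  · rw [HasSize, Set.image_congr power_null, hne.image_const]
    exact isLUB_singleton

theorem Unbiased.powerFn_le {P0 : Set (ι → ℝ)} {φ : (ι → ℕ) → ℝ} (hφ : Unbiased ι n P0 φ)
    (hdense : probSimplex ι ⊆ closure (probSimplex ι \ P0)) {π₀ π : ι → ℝ} (hπ₀ : π₀ ∈ P0)
    (hπ : π ∈ probSimplex ι) : powerFn ι n φ π₀ ≤ powerFn ι n φ π :=
  closure_minimal (hφ π₀ hπ₀) (isClosed_le continuous_const (continuous_powerFn φ)) (hdense hπ)

end PowerFunctions

section LowRank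

open MvPolynomial

theorem rank_of_smul {K m n : Type*} [Field K] [Fintype n] {c : K} (hc : c ≠ 0) (A : m × n → K) :
    (Matrix.of fun i j ↦ (c • A) (i, j)).rank = (Matrix.of fun i j ↦ A (i, j)).rank :=
  Matrix.rank_smul_of_mem_nonZeroDivisors (.of fun i j ↦ A (i, j))
    (mem_nonZeroDivisors_of_ne_zero hc)

/-- The probability matrices of rank less than `r`, as a null hypothesis on the simplex. -/
def lowRankSimplex (m n : Type) [Fintype m] [Fintype n] (r : ℕ) : Set (m × n → ℝ) :=
  {π ∈ probSimplex (m × n) | (Matrix.of fun i j ↦ π (i, j)).rank < r}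

theorem lowRankSimplex_eq_zeros_sumSqMinors (p q r : ℕ) : lowRankSimplex (Fin p) (Fin q) r =
    {π ∈ probSimplex (Fin p × Fin q) | eval π (sumSqMinors p q r) = 0} := by
  simp only [lowRankSimplex, eval_sumSqMinors_eq_zero_iff]

variable {m n : Type} [Fintype m] [Fintype n] {r : ℕ}

theorem inv_sum_smul_mem_lowRankSimplex {A : m × n → ℝ} (hA : 0 < A)
    (hrank : (Matrix.of fun i j ↦ A (i, j)).rank < r) :
    (∑ e, A e)⁻¹ • A ∈ lowRankSimplex m n r :=
  ⟨inv_sum_smul_mem_probSimplex hA,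
    (rank_of_smul (inv_ne_zero (Fintype.sum_pos hA).ne') A).trans_lt hrank⟩

theorem lowRankSimplex_nonempty [Nonempty m] [Nonempty n] (hr : 2 ≤ r) :
    (lowRankSimplex m n r).Nonempty := by
  have hpos : (0 : m × n → ℝ) < fun _ ↦ 1 := lt_of_strongLT fun _ ↦ one_pos
  refine ⟨_, inv_sum_smul_mem_lowRankSimplex hpos <| lt_of_le_of_lt ?_ hr⟩
  simpa [Matrix.vecMulVec] using Matrix.rank_vecMulVec_le (fun _ : m ↦ (1 : ℝ)) fun _ : n ↦ 1

theorem exists_mem_probSimplex_le_rank {p q : ℕ} (hr : r ≠ 0) (hrp : r ≤ p) (hrq : r ≤ q) :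
    ∃ π ∈ probSimplex (Fin p × Fin q), r ≤ (Matrix.of fun i j ↦ π (i, j)).rank := by
  let D : Fin p × Fin q → ℝ := fun e ↦ if (e.1 : ℕ) = e.2 then 1 else 0
  have hD : 0 < D := Pi.lt_def.2
    ⟨fun e ↦ by positivity, (⟨0, by omega⟩, ⟨0, by omega⟩), by simp [D]⟩
  refine ⟨_, inv_sum_smul_mem_probSimplex hD, ?_⟩
  rw [rank_of_smul (inv_ne_zero (Fintype.sum_pos hD).ne')]
  have hone : (Matrix.of fun i j ↦ D (i, j)).submatrix (Fin.castLE hrp) (Fin.castLE hrq) = 1 := by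
    ext a b
    simp [D, Matrix.one_apply, Fin.ext_iff]
  calc r = (1 : Matrix (Fin r) (Fin r) ℝ).rank := by simp
    _ ≤ _ := hone ▸ Matrix.rank_submatrix_le _ _ _

theorem probSimplex_subset_closure_diff_lowRankSimplex {p q : ℕ} (hr : r ≠ 0) (hrp : r ≤ p)
    (hrq : r ≤ q) : probSimplex (Fin p × Fin q) ⊆
      closure (probSimplex (Fin p × Fin q) \ lowRankSimplex (Fin p) (Fin q) r) := by
  obtain ⟨z, hz, hrank⟩ := exists_mem_probSimplex_le_rank hr hrp hrq
  have hdense := subset_closure_eval_ne_zero convex_probSimplex (sumSqMinors p q r) hz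
    (eval_sumSqMinors_eq_zero_iff.not.2 hrank.not_gt)
  refine hdense.trans (closure_mono fun π hπ ↦ ⟨hπ.1, fun hlow ↦ ?_⟩)
  exact hπ.2 (eval_sumSqMinors_eq_zero_iff.2 hlow.2)

theorem eq_zero_of_eval_eq_zero_on_lowRankSimplex [Nonempty m] {P : MvPolynomial (m × n) ℝ} {d : ℕ}
    (hr : 2 ≤ r) (hrn : r ≤ Fintype.card n) (hP : P.IsHomogeneous d) (hd : d < 2 * r)
    (hnonneg : ∀ π ∈ probSimplex (m × n), 0 ≤ eval π P)
    (hzero : ∀ π ∈ lowRankSimplex m n r, eval π P = 0) : P = 0 := by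
  obtain ⟨s, rfl⟩ : ∃ s, r = s + 1 := ⟨r - 1, by omega⟩
  have hs : NeZero s := ⟨by omega⟩
  have : Nonempty n := Fintype.card_pos_iff.1 (by omega)
  have hpos (A : m × n → ℝ) (hA : ∀ e, 0 < A e) : 0 ≤ eval A P := by
    rw [eval_eq_sum_pow_mul_eval_inv_sum_smul hP (lt_of_strongLT hA)]
    exact mul_nonneg (pow_nonneg (sum_nonneg fun e _ ↦ (hA e).le) d)
      (hnonneg _ (inv_sum_smul_mem_probSimplex (lt_of_strongLT hA)))
  have hvanish : VanishesOnPosProducts P s := by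
    intro U V hU hV
    have hUV : 0 < fun e : m × n ↦ (U * V) e.1 e.2 := by
      refine lt_of_strongLT fun e ↦ ?_
      rw [Matrix.mul_apply]
      exact sum_pos (fun k _ ↦ mul_pos (hU _ _) (hV _ _)) univ_nonempty
    have hrank : (U * V).rank < s + 1 := Nat.lt_succ_of_le <|
      (Matrix.rank_mul_le_left U V).trans (by simpa using U.rank_le_card_width)
    rw [eval_eq_sum_pow_mul_eval_inv_sum_smul hP hUV,
      hzero _ (inv_sum_smul_mem_lowRankSimplex hUV hrank), mul_zero]
  exact hvanish.eq_zero hs.ne (by omega) hP hd hpos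

theorem Unbiased.powerFn_eq_of_lt_two_mul {p q d : ℕ} (hr : 2 ≤ r) (hrp : r ≤ p) (hrq : r ≤ q)
    (hd : d < 2 * r) {φ : (Fin p × Fin q → ℕ) → ℝ}
    (hφ : Unbiased (Fin p × Fin q) d (lowRankSimplex (Fin p) (Fin q) r) φ)
    {π π' : Fin p × Fin q → ℝ} (hπ : π ∈ probSimplex (Fin p × Fin q))
    (hπ' : π' ∈ probSimplex (Fin p × Fin q)) : powerFn _ d φ π = powerFn _ d φ π' := by
  have : Nonempty (Fin p) := ⟨0, by omega⟩
  have : Nonempty (Fin q) := ⟨0, by omega⟩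
  obtain ⟨π₀, hπ₀⟩ := lowRankSimplex_nonempty (m := Fin p) (n := Fin q) hr
  set a := powerFn _ d φ π₀
  have hdense := probSimplex_subset_closure_diff_lowRankSimplex (by omega) hrp hrq
  let P := powerPoly d fun x ↦ 1 * φ x + -a
  have eval_P {ρ} (hρ : ρ ∈ probSimplex (Fin p × Fin q)) : eval ρ P = powerFn _ d φ ρ - a := by
    rw [eval_powerPoly, powerFn_mul_add φ 1 (-a) hρ, one_mul, sub_eq_add_neg]
  have P_eq_zero : P = 0 := by
    refine eq_zero_of_eval_eq_zero_on_lowRankSimplex hr (by simpa using hrq)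
      (isHomogeneous_powerPoly _) hd (fun ρ hρ ↦ ?_) fun ρ hρ ↦ ?_
    · exact (eval_P hρ).symm ▸ sub_nonneg.2 (hφ.powerFn_le hdense hπ₀ hρ)
    · rw [eval_P hρ.1, sub_eq_zero]
      exact le_antisymm (hφ.powerFn_le hdense hρ hπ₀.1) (hφ.powerFn_le hdense hπ₀ hρ.1)
  have power_eq {ρ} (hρ : ρ ∈ probSimplex (Fin p × Fin q)) : powerFn _ d φ ρ = a := by
    simpa [P_eq_zero, sub_eq_zero, eq_comm] using eval_P hρ
  rw [power_eq hπ, power_eq hπ']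

end LowRank

/-- the NTUB and SUB unbiasedness thresholds for the bounded-rank null
hypothesis both equal `2r`, with an SUB power polynomial `c·∑_{I,J} det(π_{I,J})² + α`. -/
theorem stmt_17 (p q r : ℕ) (hp : 2 ≤ p) (hq : 2 ≤ q) (hr2 : 2 ≤ r) (hr : r ≤ min p q)
    (P0 : Set (Fin p × Fin q → ℝ))
    (hP0 : P0 = {π ∈ probSimplex (Fin p × Fin q) |
      (Matrix.of fun i j => π (i, j)).rank < r}) :
    (∀ n : ℕ, n < 2 * r →
      ¬ ∃ φ, IsTest (Fin p × Fin q) n φ ∧ IsNTUB (Fin p × Fin q) n P0 φ) ∧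
    (∀ α : ℝ, α ∈ Set.Ioo (0 : ℝ) 1 → ∃ c : ℝ, 0 < c ∧ ∃ φ,
      IsTest (Fin p × Fin q) (2 * r) φ ∧
      IsSUB (Fin p × Fin q) (2 * r) P0 φ ∧
      HasSize (Fin p × Fin q) (2 * r) P0 α φ ∧
      ∀ π ∈ probSimplex (Fin p × Fin q),
        powerFn (Fin p × Fin q) (2 * r) φ π =
          c * (∑ s ∈ Finset.powersetCard r (Finset.univ : Finset (Fin p)),
               ∑ t ∈ Finset.powersetCard r (Finset.univ : Finset (Fin q)),
                 minorDetSq p q r π s t) + α) := by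
  obtain rfl : P0 = lowRankSimplex (Fin p) (Fin q) r := hP0
  obtain ⟨hrp, hrq⟩ := le_min_iff.1 hr
  refine ⟨?_, fun α hα ↦ ?_⟩
  · rintro n hn ⟨φ, -, hφ, π, hπ, π', hπ', hne⟩
    exact hne (hφ.powerFn_eq_of_lt_two_mul hr2 hrp hrq hn hπ hπ')
  · have : NeZero p := ⟨by omega⟩
    have : NeZero q := ⟨by omega⟩
    simpa only [eval_sumSqMinors] using exists_isSUB_hasSize_of_isHomogeneous
      (isHomogeneous_sumSqMinors p q r) (fun π _ ↦ eval_sumSqMinors_nonneg π)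
      (lowRankSimplex_eq_zeros_sumSqMinors p q r) (lowRankSimplex_nonempty hr2) hα
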